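/- Ordering of the two Rényi divergences: Let ρ be a density matrix and σ a positive semidefinite matrix of the same size with ker σ ⊆ ker ρ, and let α ∈ (0,1)∪(1,∞). Then D_α(ρ‖σ) ≥ D̃_α(ρ‖σ); equivalently, tr( (σ^{(1−α)/(2α)} ρ σ^{(1−α)/(2α)})^α ) ≤ tr(ρ^α σ^{1−α}) for α > 1, and tr( (σ^{(1−α)/(2α)} ρ σ^{(1−α)/(2α)})^α ) ≥ tr(ρ^α σ^{1−α}) for α ∈ (0,1). -/

import Mathlib

open scoped Kronecker ComplexOrder
open Matrix

/-- Real power of a matrix via the functional calculus on the eigenvalues,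
with the convention `0 ^ t = 0` (powers taken on the support). -/
noncomputable def matRpow {n : Type*} [Fintype n] [DecidableEq n]
    (A : Matrix n n ℂ) (t : ℝ) : Matrix n n ℂ :=
  if hA : A.IsHermitian then
    (hA.eigenvectorUnitary : Matrix n n ℂ) *
      Matrix.diagonal (fun i =>
        ((if hA.eigenvalues i = 0 then (0 : ℝ) else (hA.eigenvalues i) ^ t : ℝ) : ℂ)) *
      star (hA.eigenvectorUnitary : Matrix n n ℂ)
  else 0

/-- Matrix logarithm on the support. -/
noncomputable def matLog {n : Type*} [Fintype n] [DecidableEq n]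
    (A : Matrix n n ℂ) : Matrix n n ℂ :=
  if hA : A.IsHermitian then
    (hA.eigenvectorUnitary : Matrix n n ℂ) *
      Matrix.diagonal (fun i => ((Real.log (hA.eigenvalues i) : ℝ) : ℂ)) *
      star (hA.eigenvectorUnitary : Matrix n n ℂ)
  else 0

/-- Partial trace over the first tensor factor. -/
noncomputable def trFst {a b : Type*} [Fintype a] (M : Matrix (a × b) (a × b) ℂ) :
    Matrix b b ℂ :=
  Matrix.of fun j j' => ∑ i, M (i, j) (i, j')

/-- Partial trace over the second tensor factor. -/
noncomputable def trSnd {a b : Type*} [Fintype b] (M : Matrix (a × b) (a × b) ℂ) :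
    Matrix a a ℂ :=
  Matrix.of fun i i' => ∑ j, M (i, j) (i', j)

/-- Partial trace over the third factor of a tripartite system. -/
noncomputable def trThird {a b c : Type*} [Fintype c]
    (M : Matrix (a × b × c) (a × b × c) ℂ) : Matrix (a × b) (a × b) ℂ :=
  Matrix.of fun p p' => ∑ k, M (p.1, p.2, k) (p'.1, p'.2, k)

/-- Partial trace over the second factor of a tripartite system. -/
noncomputable def trSecond {a b c : Type*} [Fintype b]
    (M : Matrix (a × b × c) (a × b × c) ℂ) : Matrix (a × c) (a × c) ℂ :=
  Matrix.of fun p p' => ∑ j, M (p.1, j, p.2) (p'.1, j, p'.2)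

/-- Partial trace over the first two factors of a tripartite system. -/
noncomputable def trFstSnd {a b c : Type*} [Fintype a] [Fintype b]
    (M : Matrix (a × b × c) (a × b × c) ℂ) : Matrix c c ℂ :=
  Matrix.of fun k k' => ∑ i, ∑ j, M (i, j, k) (i, j, k')

/-- Partial trace over the first and third factors of a tripartite system. -/
noncomputable def trFstThird {a b c : Type*} [Fintype a] [Fintype c]
    (M : Matrix (a × b × c) (a × b × c) ℂ) : Matrix b b ℂ :=
  Matrix.of fun j j' => ∑ i, ∑ k, M (i, j, k) (i, j', k)

/-- Quantum Rényi relative entropy `D_α(ρ‖σ)`. -/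
noncomputable def renyiDiv {n : Type*} [Fintype n] [DecidableEq n]
    (α : ℝ) (ρ σ : Matrix n n ℂ) : ℝ :=
  (α - 1)⁻¹ * Real.log ((matRpow ρ α * matRpow σ (1 - α)).trace.re)

/-- Sandwiched quantum Rényi divergence `D̃_α(ρ‖σ)`. -/
noncomputable def sandwichedRenyiDiv {n : Type*} [Fintype n] [DecidableEq n]
    (α : ℝ) (ρ σ : Matrix n n ℂ) : ℝ :=
  (α - 1)⁻¹ * Real.log
    ((matRpow (matRpow σ ((1 - α) / (2 * α)) * ρ * matRpow σ ((1 - α) / (2 * α))) α).trace.re)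

/-- Quantum relative entropy `D(ρ‖σ)`. -/
noncomputable def relEntropy {n : Type*} [Fintype n] [DecidableEq n]
    (ρ σ : Matrix n n ℂ) : ℝ :=
  (ρ * (matLog ρ - matLog σ)).trace.re

/-!
Up to cyclicity of the trace, both traces are sums of powers of the squared singular values `μᵢ` of
products `M = A ^ t * B ^ t`. The truncated product `∏ max (μᵢ / c) 1` is the maximum of
`‖det (Pᴴ * M * Q)‖ ^ 2 / c ^ k` over all `k` and all contractions `P` and `Q` with `k` columns.
This determinant is holomorphic in `M`, so Hadamard's three lines theorem, applied along
`z ↦ A ^ z * B ^ z`, shows that the squared singular values of `A ^ t * B ^ t` are weakly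
log-majorized by the `t`-th powers of those of `A * B` for `0 < t ≤ 1` (the Araki–Lieb–Thirring
inequality). Integrating the logarithm of the truncated products over `c`, with
`x = ∫₀ᴷ log⁺ (x / c) dc` for `0 ≤ x ≤ K`, turns log-majorization into an inequality of traces.
-/

section DeterminantBounds

open scoped MatrixOrder Matrix.Norms.L2Operator

variable {𝕜 m n k : Type*} [RCLike 𝕜] [Fintype m] [Fintype n] [Fintype k]

theorem trace_cfc [DecidableEq n] {A : Matrix n n 𝕜} (hA : A.IsHermitian) (f : ℝ → ℝ) :
    (cfc f A).trace = ∑ i, (f (hA.eigenvalues i) : 𝕜) := by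
  rw [hA.cfc_eq, IsHermitian.cfc, Unitary.conjStarAlgAut_apply, trace_mul_cycle,
    Unitary.coe_star_mul_self, one_mul, trace_diagonal]
  rfl

theorem det_cfc [DecidableEq n] {A : Matrix n n 𝕜} (hA : A.IsHermitian) (f : ℝ → ℝ) :
    (cfc f A).det = ∏ i, (f (hA.eigenvalues i) : 𝕜) := by
  rw [hA.cfc_eq, IsHermitian.cfc, Unitary.conjStarAlgAut_apply, det_mul_right_comm,
    Unitary.mul_star_self_of_mem hA.eigenvectorUnitary.2, one_mul, det_diagonal]
  rfl

theorem det_le_one [DecidableEq n] {A : Matrix n n 𝕜} (h0 : 0 ≤ A) (h1 : A ≤ 1) : A.det ≤ 1 := by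
  have hA := h0.posSemidef
  rw [hA.1.det_eq_prod_eigenvalues]
  have hle : ∀ i, hA.1.eigenvalues i ≤ 1 := fun i =>
    (CFC.le_one_iff A).1 h1 _ (hA.1.eigenvalues_mem_spectrum_real i)
  exact_mod_cast Finset.prod_le_one (fun i _ => hA.eigenvalues_nonneg i) fun i _ => hle i

theorem det_le_det [DecidableEq n] {A B : Matrix n n 𝕜} (hA : 0 ≤ A) (hAB : A ≤ B) :
    A.det ≤ B.det := by
  have hB : 0 ≤ B := hA.trans hAB
  by_cases hdet : A.det = 0
  · rw [hdet]
    exact hB.posSemidef.det_nonneg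
  have hBpos : B.PosDef := by
    simpa using (hA.posSemidef.posDef_iff_det_ne_zero.2 hdet).add_posSemidef (le_iff.1 hAB)
  obtain ⟨S, rfl⟩ := CStarAlgebra.nonneg_iff_eq_star_mul_self.1 hB
  have hS : IsUnit S.det := by
    have := hBpos.det_pos.ne'
    rw [det_mul, mul_ne_zero_iff] at this
    exact this.2.isUnit
  have hle : star S⁻¹ * A * S⁻¹ ≤ 1 := by
    refine (star_left_conjugate_le_conjugate hAB S⁻¹).trans_eq ?_
    rw [← mul_assoc, mul_assoc, mul_nonsing_inv _ hS, ← star_mul, mul_nonsing_inv _ hS]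
    simp
  have hdet_le := det_le_one (star_left_conjugate_nonneg hA S⁻¹) hle
  calc A.det = star S.det * (star S⁻¹ * A * S⁻¹).det * S.det := by
        rw [← det_conjTranspose S, ← det_mul, ← det_mul, ← star_eq_conjTranspose]
        simp only [mul_assoc, nonsing_inv_mul _ hS, mul_one]
        rw [← mul_assoc, ← star_mul, nonsing_inv_mul _ hS, star_one, one_mul]
    _ ≤ star S.det * 1 * S.det := star_left_conjugate_le_conjugate hdet_le _
    _ = (star S * S).det := by
        rw [mul_one, det_mul, star_eq_conjTranspose, det_conjTranspose]

theorem conjTranspose_mul_self_le_one_iff [DecidableEq n] {K : Matrix m n ℂ} :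
    Kᴴ * K ≤ 1 ↔ ‖K‖ ≤ 1 := by
  rw [← CStarAlgebra.norm_le_one_iff_of_nonneg _ (posSemidef_conjTranspose_mul_self K).nonneg,
    l2_opNorm_conjTranspose_mul_self, ← sq, sq_le_one_iff₀ (norm_nonneg K)]

theorem self_mul_conjTranspose_le_one_iff [DecidableEq m] [DecidableEq n] {K : Matrix m n ℂ} :
    K * Kᴴ ≤ 1 ↔ ‖K‖ ≤ 1 := by
  rw [← l2_opNorm_conjTranspose, ← conjTranspose_mul_self_le_one_iff, conjTranspose_conjTranspose]

-- Writing `max (x / c) 1` as `1 + r ^ 2` makes Sylvester's identity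
-- `det (1 + X * Y) = det (1 + Y * X)` available in `det_compression_le`.
theorem exists_le_smul_one_add_sq [DecidableEq n] {A : Matrix n n 𝕜} (hA : A.IsHermitian)
    {c : ℝ} (hc : 0 < c) :
    ∃ R : Matrix n n 𝕜, R.IsHermitian ∧ A ≤ c • (1 + R * R) ∧
      (1 + R * R).det = ((∏ i, max (hA.eigenvalues i / c) 1 : ℝ) : 𝕜) := by
  have hone : 1 + cfc (fun x => √(max (x / c) 1 - 1)) A * cfc (fun x => √(max (x / c) 1 - 1)) A =
      cfc (fun x => max (x / c) 1) A := by
    rw [← cfc_mul _ _ A, ← map_one (algebraMap ℝ (Matrix n n 𝕜)), ← cfc_const_add 1 _ A]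
    refine cfc_congr fun x _ => ?_
    simp [Real.mul_self_sqrt]
  refine ⟨cfc (fun x => √(max (x / c) 1 - 1)) A, cfc_predicate _ A, ?_, ?_⟩
  · rw [hone, ← cfc_smul c _ A]
    conv_lhs => rw [← cfc_id ℝ A]
    refine cfc_mono fun x _ => ?_
    rw [smul_eq_mul, mul_max_of_nonneg _ _ hc.le, mul_div_cancel₀ _ hc.ne']
    exact le_max_left _ _
  · rw [hone, det_cfc hA]
    push_cast
    rfl

theorem det_compression_le [DecidableEq n] [DecidableEq k] {A : Matrix n n ℂ}
    (hA : A.PosSemidef) {Q : Matrix n k ℂ} (hQ : ‖Q‖ ≤ 1) {c : ℝ} (hc : 0 < c) :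
    (Qᴴ * A * Q).det ≤ ((c ^ Fintype.card k * ∏ i, max (hA.1.eigenvalues i / c) 1 : ℝ) : ℂ) := by
  obtain ⟨R, hR, hle, hdet⟩ := exists_le_smul_one_add_sq hA.1 hc
  have hdom : Qᴴ * A * Q ≤ c • (1 + (R * Q)ᴴ * (R * Q)) := by
    have hQ' : Qᴴ * Q ≤ 1 := conjTranspose_mul_self_le_one_iff.2 hQ
    calc Qᴴ * A * Q ≤ Qᴴ * (c • (1 + R * R)) * Q := by
          rw [le_iff, ← Matrix.sub_mul, ← Matrix.mul_sub]
          exact (le_iff.1 hle).conjTranspose_mul_mul_same Q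
      _ = c • (Qᴴ * Q + (R * Q)ᴴ * (R * Q)) := by
          rw [conjTranspose_mul, hR.eq]
          simp only [Matrix.mul_add, Matrix.add_mul, Matrix.mul_smul, Matrix.smul_mul,
            Matrix.mul_one, Matrix.mul_assoc, smul_add]
      _ ≤ c • (1 + (R * Q)ᴴ * (R * Q)) := by gcongr
  have hswap : (1 + (R * Q)ᴴ * (R * Q)).det ≤ (1 + R * R).det := by
    rw [det_one_add_mul_comm]
    refine det_le_det ?_ ?_
    · exact add_nonneg zero_le_one (posSemidef_self_mul_conjTranspose _).nonneg
    · gcongr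
      rw [conjTranspose_mul, hR.eq, le_iff]
      convert (le_iff.1 (self_mul_conjTranspose_le_one_iff.2 hQ)).mul_mul_conjTranspose_same R
        using 1
      simp only [hR.eq, Matrix.mul_sub, Matrix.sub_mul, Matrix.mul_one, Matrix.mul_assoc]
  calc (Qᴴ * A * Q).det ≤ (c • (1 + (R * Q)ᴴ * (R * Q))).det :=
        det_le_det (hA.conjTranspose_mul_mul_same Q).nonneg hdom
    _ = (c : ℂ) ^ Fintype.card k * (1 + (R * Q)ᴴ * (R * Q)).det := by
        rw [← Complex.coe_smul, det_smul]
    _ ≤ (c : ℂ) ^ Fintype.card k * (1 + R * R).det := by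
        gcongr
    _ = _ := by rw [hdet]; push_cast; rfl

/-- The squared singular values of a matrix `M`, with multiplicity: the eigenvalues of `Mᴴ M`. -/
noncomputable def sqSingVal [DecidableEq n] (M : Matrix m n 𝕜) (i : n) : ℝ :=
  (isHermitian_conjTranspose_mul_self M).eigenvalues i

theorem sqSingVal_nonneg [DecidableEq n] (M : Matrix m n 𝕜) (i : n) : 0 ≤ sqSingVal M i :=
  (posSemidef_conjTranspose_mul_self M).eigenvalues_nonneg i

theorem sum_sqSingVal_rpow_pos [DecidableEq n] {M : Matrix m n 𝕜} (hM : M ≠ 0) (t : ℝ) :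
    0 < ∑ i, sqSingVal M i ^ t := by
  have hne : (isHermitian_conjTranspose_mul_self M).eigenvalues ≠ 0 := by
    rwa [Ne, IsHermitian.eigenvalues_eq_zero_iff, conjTranspose_mul_self_eq_zero]
  obtain ⟨i, hi⟩ := Function.ne_iff.1 hne
  refine Finset.sum_pos' (fun j _ => Real.rpow_nonneg (sqSingVal_nonneg M j) t)
    ⟨i, Finset.mem_univ i, Real.rpow_pos_of_pos ((sqSingVal_nonneg M i).lt_of_ne' hi) t⟩

theorem trace_conjTranspose_mul_self_eq_sum_sqSingVal [DecidableEq n] (M : Matrix m n 𝕜) :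
    (Mᴴ * M).trace = ∑ i, (sqSingVal M i : 𝕜) :=
  (isHermitian_conjTranspose_mul_self M).trace_eq_sum_eigenvalues

theorem det_conjTranspose_mul_self_eq [DecidableEq n] (A : Matrix n n 𝕜) :
    (Aᴴ * A).det = ((‖A.det‖ ^ 2 : ℝ) : 𝕜) := by
  rw [det_mul, det_conjTranspose, RCLike.star_def, RCLike.conj_mul]
  norm_cast

theorem sq_norm_det_compression_le [DecidableEq n] [DecidableEq k]
    (M : Matrix m n ℂ) {P : Matrix m k ℂ} {Q : Matrix n k ℂ} (hP : ‖P‖ ≤ 1) (hQ : ‖Q‖ ≤ 1)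
    {c : ℝ} (hc : 0 < c) :
    ‖(Pᴴ * M * Q).det‖ ^ 2 ≤ c ^ Fintype.card k * ∏ i, max (sqSingVal M i / c) 1 := by
  classical
  have hP' : P * Pᴴ ≤ 1 := self_mul_conjTranspose_le_one_iff.2 hP
  have hle : (Pᴴ * M * Q)ᴴ * (Pᴴ * M * Q) ≤ Qᴴ * (Mᴴ * M) * Q := by
    rw [le_iff]
    convert (le_iff.1 hP').conjTranspose_mul_mul_same (M * Q) using 1
    simp only [conjTranspose_mul, conjTranspose_conjTranspose, Matrix.mul_assoc, Matrix.mul_sub,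
      Matrix.sub_mul, Matrix.one_mul]
  have hdet := (det_le_det (posSemidef_conjTranspose_mul_self _).nonneg hle).trans
    (det_compression_le (posSemidef_conjTranspose_mul_self M) hQ hc)
  rw [det_conjTranspose_mul_self_eq] at hdet
  exact Complex.real_le_real.1 hdet

theorem exists_isometry_conj_eq_diagonal [DecidableEq n] {A : Matrix n n 𝕜} (hA : A.IsHermitian)
    (s : Finset n) :
    ∃ V : Matrix n s 𝕜, Vᴴ * V = 1 ∧ Vᴴ * A * V = diagonal fun i : s => (hA.eigenvalues i : 𝕜) := by
  have compress (B : Matrix n n 𝕜) (U : Matrix n n 𝕜) : (U.submatrix id ((↑) : s → n))ᴴ * B *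
      U.submatrix id ((↑) : s → n) = (Uᴴ * B * U).submatrix (↑) (↑) := rfl
  refine ⟨(hA.eigenvectorUnitary : Matrix n n 𝕜).submatrix id ((↑) : s → n), ?_, ?_⟩
  · have h := compress 1 hA.eigenvectorUnitary
    rwa [Matrix.mul_one, Matrix.mul_one, ← star_eq_conjTranspose,
      Unitary.star_mul_self_of_mem hA.eigenvectorUnitary.2,
      submatrix_one _ Subtype.val_injective] at h
  · have h := hA.conjStarAlgAut_star_eigenvectorUnitary
    rw [Unitary.conjStarAlgAut_star_apply, star_eq_conjTranspose] at h
    rw [compress, h, submatrix_diagonal _ _ Subtype.val_injective]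
    rfl

theorem norm_le_one_of_conjTranspose_mul_self_eq_one [DecidableEq n] {K : Matrix m n ℂ}
    (h : Kᴴ * K = 1) : ‖K‖ ≤ 1 :=
  conjTranspose_mul_self_le_one_iff.1 h.le

theorem exists_sq_norm_det_compression_eq_prod [DecidableEq n] (M : Matrix m n ℂ)
    {s : Finset n} (hs : ∀ i ∈ s, 0 < sqSingVal M i) :
    ∃ (P : Matrix m s ℂ) (Q : Matrix n s ℂ), ‖P‖ ≤ 1 ∧ ‖Q‖ ≤ 1 ∧
      ‖(Pᴴ * M * Q).det‖ ^ 2 = ∏ i ∈ s, sqSingVal M i := by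
  obtain ⟨Q, hQ, hMQ⟩ :=
    exists_isometry_conj_eq_diagonal (isHermitian_conjTranspose_mul_self M) s
  change _ = diagonal fun i : s => (sqSingVal M i : ℂ) at hMQ
  set D : Matrix s s ℂ := diagonal fun i => ((√(sqSingVal M i))⁻¹ : ℝ)
  have hPM : (M * Q * D)ᴴ * M * Q = diagonal fun i : s => ((√(sqSingVal M i) : ℝ) : ℂ) := by
    calc (M * Q * D)ᴴ * M * Q = Dᴴ * (Qᴴ * (Mᴴ * M) * Q) := by
          simp only [conjTranspose_mul, Matrix.mul_assoc]
      _ = _ := by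
          rw [hMQ, diagonal_conjTranspose, diagonal_mul_diagonal]
          refine congr_arg diagonal (funext fun i => ?_)
          rw [Pi.star_apply, RCLike.star_def, Complex.conj_ofReal, ← Complex.ofReal_mul,
            inv_mul_eq_div, Real.div_sqrt]
  refine ⟨M * Q * D, Q, ?_, norm_le_one_of_conjTranspose_mul_self_eq_one hQ, ?_⟩
  · apply norm_le_one_of_conjTranspose_mul_self_eq_one
    rw [← Matrix.mul_assoc, ← Matrix.mul_assoc, hPM, diagonal_mul_diagonal, ← diagonal_one]
    refine congr_arg diagonal (funext fun i => ?_)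
    rw [← Complex.ofReal_mul, mul_inv_cancel₀ (Real.sqrt_pos.2 (hs i i.2)).ne', Complex.ofReal_one]
  · rw [hPM, det_diagonal, norm_prod, ← Finset.prod_pow, ← Finset.prod_coe_sort s]
    refine Finset.prod_congr rfl fun i _ => ?_
    rw [Complex.norm_real, Real.norm_eq_abs, sq_abs, Real.sq_sqrt (hs i i.2).le]

theorem exists_sq_norm_det_compression_eq [DecidableEq n] (M : Matrix m n ℂ) {c : ℝ}
    (hc : 0 < c) :
    ∃ (s : Finset n) (P : Matrix m s ℂ) (Q : Matrix n s ℂ), ‖P‖ ≤ 1 ∧ ‖Q‖ ≤ 1 ∧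
      ‖(Pᴴ * M * Q).det‖ ^ 2 = c ^ Fintype.card s * ∏ i, max (sqSingVal M i / c) 1 := by
  obtain ⟨P, Q, hP, hQ, hdet⟩ := exists_sq_norm_det_compression_eq_prod M
    (s := {i | c < sqSingVal M i}) fun i hi => hc.trans (Finset.mem_filter.1 hi).2
  refine ⟨_, P, Q, hP, hQ, ?_⟩
  have hmax : ∀ i, max (sqSingVal M i / c) 1 =
      if c < sqSingVal M i then sqSingVal M i / c else 1 := fun i => by
    split_ifs with hi
    · exact max_eq_left ((one_le_div hc).2 hi.le)
    · exact max_eq_right ((div_le_one hc).2 (not_lt.1 hi))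
  rw [hdet, Fintype.card_coe, Finset.prod_congr rfl fun i _ => hmax i, ← Finset.prod_filter,
    Finset.prod_div_distrib, Finset.prod_const, mul_div_cancel₀ _ (pow_pos hc _).ne']

theorem norm_det_le_one [DecidableEq n] {K : Matrix n n ℂ} (hK : ‖K‖ ≤ 1) : ‖K.det‖ ≤ 1 := by
  have h := det_le_one (posSemidef_conjTranspose_mul_self K).nonneg
    (conjTranspose_mul_self_le_one_iff.2 hK)
  rw [det_conjTranspose_mul_self_eq] at h
  exact (sq_le_one_iff₀ (norm_nonneg _)).1 (Complex.real_le_real.1 h)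

theorem norm_det_le_pow [DecidableEq n] {A : Matrix n n ℂ} {C : ℝ} (hC : 0 < C) (hA : ‖A‖ ≤ C) :
    ‖A.det‖ ≤ C ^ Fintype.card n := by
  have hK : ‖(C : ℂ)⁻¹ • A‖ ≤ 1 := by
    rw [norm_smul, norm_inv, Complex.norm_real, Real.norm_of_nonneg hC.le]
    exact inv_mul_le_one_of_le₀ hA hC.le
  have h := norm_det_le_one hK
  rwa [det_smul, norm_mul, norm_pow, norm_inv, Complex.norm_real, Real.norm_of_nonneg hC.le,
    inv_pow, inv_mul_le_one₀ (pow_pos hC _)] at h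

theorem norm_compression_le {l : Type*} [Fintype l] [DecidableEq m] [DecidableEq n] [DecidableEq k]
    {P : Matrix l m ℂ} {Q : Matrix n k ℂ} (hP : ‖P‖ ≤ 1) (hQ : ‖Q‖ ≤ 1) (M : Matrix m n ℂ) :
    ‖P * M * Q‖ ≤ ‖M‖ := calc
  ‖P * M * Q‖ ≤ ‖P‖ * ‖M‖ * ‖Q‖ := (l2_opNorm_mul _ _).trans (by gcongr; exact l2_opNorm_mul _ _)
  _ ≤ 1 * ‖M‖ * 1 := by gcongr
  _ = ‖M‖ := by ring

theorem differentiable_det [DecidableEq n] {F : ℂ → Matrix n n ℂ}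
    (hF : ∀ i j, Differentiable ℂ fun z => F z i j) : Differentiable ℂ fun z => (F z).det := by
  simp only [det_apply']
  fun_prop

theorem prod_max_sqSingVal_le_rpow [DecidableEq m] [DecidableEq n] {F : ℂ → Matrix m n ℂ}
    (hF : ∀ i j, Differentiable ℂ fun z => F z i j)
    {C : ℝ} (hC : ∀ z, 0 ≤ z.re → z.re ≤ 1 → ‖F z‖ ≤ C)
    (h0 : ∀ z, z.re = 0 → ‖F z‖ ≤ 1) {M : Matrix m n ℂ}
    (h1 : ∀ z, z.re = 1 → ∃ (K : Matrix m m ℂ) (L : Matrix n n ℂ),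
      ‖K‖ ≤ 1 ∧ ‖L‖ ≤ 1 ∧ F z = K * M * L)
    {t : ℝ} (ht0 : 0 ≤ t) (ht1 : t ≤ 1) {c : ℝ} (hc : 0 < c) :
    ∏ i, max (sqSingVal (F t) i / c ^ t) 1 ≤ (∏ i, max (sqSingVal M i / c) 1) ^ t := by
  obtain ⟨s, P, Q, hP, hQ, hdet⟩ :=
    exists_sq_norm_det_compression_eq (F t) (Real.rpow_pos_of_pos hc t)
  have hP' : ‖Pᴴ‖ ≤ 1 := (l2_opNorm_conjTranspose P).trans_le hP
  let f (z : ℂ) : ℂ := (Pᴴ * F z * Q).det ^ 2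
  have hf : Differentiable ℂ f := by
    refine (differentiable_det fun i j => ?_).pow 2
    simp only [mul_apply]
    fun_prop
  have hfB : BddAbove ((norm ∘ f) '' Complex.HadamardThreeLines.verticalClosedStrip 0 1) := by
    refine ⟨(max C 1 ^ Fintype.card s) ^ 2, ?_⟩
    rintro _ ⟨z, hz, rfl⟩
    rw [Function.comp_apply, norm_pow]
    gcongr
    exact norm_det_le_pow (by positivity)
      ((norm_compression_le hP' hQ _).trans ((hC z hz.1 hz.2).trans (le_max_left _ _)))
  have hf0 : ∀ z ∈ Complex.re ⁻¹' {0}, ‖f z‖ ≤ 1 := fun z hz => by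
    rw [norm_pow]
    exact pow_le_one₀ (norm_nonneg _)
      (norm_det_le_one ((norm_compression_le hP' hQ _).trans (h0 z hz)))
  have hf1 : ∀ z ∈ Complex.re ⁻¹' {1},
      ‖f z‖ ≤ c ^ Fintype.card s * ∏ i, max (sqSingVal M i / c) 1 := fun z hz => by
    obtain ⟨K, L, hK, hL, hFz⟩ := h1 z hz
    have h := sq_norm_det_compression_le M (P := Kᴴ * P) (Q := L * Q)
      ((l2_opNorm_mul _ _).trans
        (mul_le_one₀ ((l2_opNorm_conjTranspose K).trans_le hK) (norm_nonneg _) hP))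
      ((l2_opNorm_mul _ _).trans (mul_le_one₀ hL (norm_nonneg _) hQ)) hc
    rw [conjTranspose_mul, conjTranspose_conjTranspose] at h
    simpa only [f, hFz, norm_pow, Matrix.mul_assoc] using h
  have hft := Complex.HadamardThreeLines.norm_le_interp_of_mem_verticalClosedStrip₀₁'
    f (z := t) ⟨ht0, ht1⟩ hf.diffContOnCl hfB hf0 hf1
  rw [Complex.ofReal_re, Real.one_rpow, one_mul, norm_pow, hdet,
    Real.mul_rpow (pow_nonneg hc.le _) (by positivity), ← Real.rpow_pow_comm hc.le] at hft
  exact le_of_mul_le_mul_left hft (by positivity)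

end DeterminantBounds

section Majorization

open MeasureTheory intervalIntegral
open scoped Interval Real

variable {ι κ : Type*} [Fintype ι] [Fintype κ]

/-- Weak log-majorization of nonnegative families: for every `k`, the product of the `k` largest
`a i` is at most the product of the `k` largest `b j`. It is encoded by truncated products, which
avoids sorting and is available for index types of different sizes. -/
def WeakLogMajorized (a : ι → ℝ) (b : κ → ℝ) : Prop :=
  ∀ c : ℝ, 0 < c → ∏ i, max (a i / c) 1 ≤ ∏ j, max (b j / c) 1

theorem max_rpow_div_rpow_one {x c p : ℝ} (hx : 0 ≤ x) (hc : 0 ≤ c) (hp : 0 ≤ p) :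
    max (x ^ p / c ^ p) 1 = max (x / c) 1 ^ p := by
  rw [← Real.div_rpow hx hc]
  rcases le_total (x / c) 1 with h | h
  · rw [max_eq_right h, Real.one_rpow, max_eq_right (Real.rpow_le_one (by positivity) h hp)]
  · rw [max_eq_left h, max_eq_left (Real.one_le_rpow h hp)]

theorem prod_max_rpow_div_rpow_one {a : ι → ℝ} (ha : ∀ i, 0 ≤ a i) {c p : ℝ} (hc : 0 ≤ c)
    (hp : 0 ≤ p) : ∏ i, max (a i ^ p / c ^ p) 1 = (∏ i, max (a i / c) 1) ^ p := by
  rw [← Real.finsetProd_rpow _ _ fun i _ => by positivity]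
  exact Finset.prod_congr rfl fun i _ => max_rpow_div_rpow_one (ha i) hc hp

theorem WeakLogMajorized.rpow {a : ι → ℝ} {b : κ → ℝ} (hab : WeakLogMajorized a b)
    (ha : ∀ i, 0 ≤ a i) (hb : ∀ j, 0 ≤ b j) {p : ℝ} (hp : 0 < p) :
    WeakLogMajorized (fun i => a i ^ p) (fun j => b j ^ p) := by
  intro c hc
  have hc' : 0 < c ^ p⁻¹ := Real.rpow_pos_of_pos hc _
  rw [← Real.rpow_inv_rpow hc.le hp.ne', prod_max_rpow_div_rpow_one ha hc'.le hp.le,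
    prod_max_rpow_div_rpow_one hb hc'.le hp.le]
  gcongr
  exact hab _ hc'

theorem log_prod_max_one {a : ι → ℝ} (ha : ∀ i, 0 ≤ a i) :
    Real.log (∏ i, max (a i) 1) = ∑ i, log⁺ (a i) := by
  rw [Real.log_prod fun i _ => by positivity]
  exact Finset.sum_congr rfl fun i _ => by rw [Real.posLog_eq_log_max_one (ha i), max_comm]

theorem eqOn_posLog_div_of_le {x : ℝ} (hx : 0 ≤ x) :
    Set.EqOn (fun c => log⁺ (x / c)) (fun c => Real.log x - Real.log c) (Ι 0 x) := by
  intro c hc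
  rw [Set.uIoc_of_le hx] at hc
  have hx0 : 0 < x := hc.1.trans_le hc.2
  change log⁺ (x / c) = _
  rw [Real.posLog_eq_log, Real.log_div hx0.ne' hc.1.ne']
  exact ((one_le_div hc.1).2 hc.2).trans (le_abs_self _)

theorem eqOn_posLog_div_of_ge {x K : ℝ} (hx : 0 ≤ x) (hxK : x ≤ K) :
    Set.EqOn (fun c => log⁺ (x / c)) (fun _ => 0) (Ι x K) := by
  intro c hc
  rw [Set.uIoc_of_le hxK] at hc
  have hc0 : 0 < c := hx.trans_lt hc.1
  refine Real.posLog_eq_zero_iff _ |>.2 ?_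
  rw [abs_of_nonneg (by positivity)]
  exact (div_le_one hc0).2 hc.1.le

theorem intervalIntegrable_posLog_div {x K : ℝ} (hx : 0 ≤ x) (hxK : x ≤ K) :
    IntervalIntegrable (fun c => log⁺ (x / c)) volume 0 K :=
  ((intervalIntegrable_const.sub intervalIntegrable_log').congr
    (eqOn_posLog_div_of_le hx).symm).trans
    (intervalIntegrable_const.congr (eqOn_posLog_div_of_ge hx hxK).symm)

theorem integral_posLog_div {x K : ℝ} (hx : 0 ≤ x) (hxK : x ≤ K) :
    ∫ c in 0..K, log⁺ (x / c) = x := calc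
  _ = (∫ c in 0..x, log⁺ (x / c)) + ∫ c in x..K, log⁺ (x / c) := by
    refine (integral_add_adjacent_intervals (intervalIntegrable_posLog_div hx le_rfl) ?_).symm
    exact intervalIntegrable_const.congr (eqOn_posLog_div_of_ge hx hxK).symm
  _ = (∫ c in 0..x, (Real.log x - Real.log c)) + ∫ _ in x..K, (0 : ℝ) := by
    rw [integral_congr_ae (.of_forall fun c hc => eqOn_posLog_div_of_le hx hc),
      integral_congr_ae (.of_forall fun c hc => eqOn_posLog_div_of_ge hx hxK hc)]
  _ = x := by
    rw [integral_sub intervalIntegrable_const intervalIntegrable_log', integral_log]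
    simp

theorem intervalIntegrable_sum_posLog_div {a : ι → ℝ} (ha : ∀ i, 0 ≤ a i) {K : ℝ}
    (haK : ∀ i, a i ≤ K) : IntervalIntegrable (fun c => ∑ i, log⁺ (a i / c)) volume 0 K := by
  simpa only [Finset.sum_fn] using IntervalIntegrable.sum Finset.univ
    fun i _ => intervalIntegrable_posLog_div (ha i) (haK i)

theorem integral_sum_posLog_div {a : ι → ℝ} (ha : ∀ i, 0 ≤ a i) {K : ℝ} (haK : ∀ i, a i ≤ K) :
    ∫ c in 0..K, ∑ i, log⁺ (a i / c) = ∑ i, a i := by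
  rw [integral_finsetSum fun i _ => intervalIntegrable_posLog_div (ha i) (haK i)]
  exact Finset.sum_congr rfl fun i _ => integral_posLog_div (ha i) (haK i)

theorem WeakLogMajorized.sum_le_sum {a : ι → ℝ} {b : κ → ℝ} (hab : WeakLogMajorized a b)
    (ha : ∀ i, 0 ≤ a i) (hb : ∀ j, 0 ≤ b j) : ∑ i, a i ≤ ∑ j, b j := by
  set K := ∑ i, a i + ∑ j, b j
  have haK : ∀ i, a i ≤ K := fun i =>
    (Finset.single_le_sum (fun i _ => ha i) (Finset.mem_univ i)).trans
      (le_add_of_nonneg_right (Finset.sum_nonneg fun j _ => hb j))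
  have hbK : ∀ j, b j ≤ K := fun j =>
    (Finset.single_le_sum (fun j _ => hb j) (Finset.mem_univ j)).trans
      (le_add_of_nonneg_left (Finset.sum_nonneg fun i _ => ha i))
  have hK : 0 ≤ K :=
    add_nonneg (Finset.sum_nonneg fun i _ => ha i) (Finset.sum_nonneg fun j _ => hb j)
  rw [← integral_sum_posLog_div ha haK, ← integral_sum_posLog_div hb hbK]
  refine integral_mono_on_of_le_Ioo hK (intervalIntegrable_sum_posLog_div ha haK)
    (intervalIntegrable_sum_posLog_div hb hbK) fun c hc => ?_
  have hac : ∀ i, 0 ≤ a i / c := fun i => div_nonneg (ha i) hc.1.le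
  have hbc : ∀ j, 0 ≤ b j / c := fun j => div_nonneg (hb j) hc.1.le
  rw [← log_prod_max_one hac, ← log_prod_max_one hbc]
  exact Real.log_le_log (by positivity) (hab c hc.1)

end Majorization

section Powers

open scoped MatrixOrder Matrix.Norms.L2Operator

variable {m n : Type*} [Fintype m] [Fintype n] [DecidableEq n]

/-- The complex power `x ^ z` taken on the support: unlike `Complex.cpow`, it vanishes at `x = 0`
even for `z = 0`. -/
noncomputable def supportCpow (x : ℝ) (z : ℂ) : ℂ :=
  if x = 0 then 0 else (x : ℂ) ^ z

theorem supportCpow_add (x : ℝ) (z w : ℂ) :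
    supportCpow x (z + w) = supportCpow x z * supportCpow x w := by
  unfold supportCpow
  split_ifs with hx
  · rw [mul_zero]
  · exact Complex.cpow_add _ _ (Complex.ofReal_ne_zero.2 hx)

theorem supportCpow_one (x : ℝ) : supportCpow x 1 = x := by
  unfold supportCpow
  split_ifs with hx
  · rw [hx, Complex.ofReal_zero]
  · exact Complex.cpow_one _

theorem supportCpow_ofReal {x : ℝ} (hx : 0 ≤ x) (t : ℝ) :
    supportCpow x t = ((if x = 0 then 0 else x ^ t : ℝ) : ℂ) := by
  unfold supportCpow
  split_ifs
  · rfl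
  · exact (Complex.ofReal_cpow hx t).symm

theorem norm_supportCpow_le_one {x : ℝ} (hx : 0 ≤ x) {z : ℂ} (hz : z.re = 0) :
    ‖supportCpow x z‖ ≤ 1 := by
  unfold supportCpow
  split_ifs with h0
  · simp
  · rw [Complex.norm_cpow_eq_rpow_re_of_pos (hx.lt_of_ne' h0), hz, Real.rpow_zero]

theorem norm_supportCpow_le_max {x : ℝ} (hx : 0 ≤ x) {z : ℂ} (hz0 : 0 ≤ z.re) (hz1 : z.re ≤ 1) :
    ‖supportCpow x z‖ ≤ max x 1 := by
  unfold supportCpow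
  split_ifs with h0
  · simp
  · rw [Complex.norm_cpow_eq_rpow_re_of_pos (hx.lt_of_ne' h0)]
    calc x ^ z.re ≤ max x 1 ^ z.re := by gcongr; exact le_max_left _ _
      _ ≤ max x 1 ^ (1 : ℝ) := Real.rpow_le_rpow_of_exponent_le (le_max_right _ _) hz1
      _ = max x 1 := Real.rpow_one _

@[fun_prop]
theorem differentiable_supportCpow (x : ℝ) : Differentiable ℂ (supportCpow x) := by
  unfold supportCpow
  split_ifs with hx
  · exact differentiable_const 0
  · exact fun z => differentiableAt_id.const_cpow (.inl (Complex.ofReal_ne_zero.2 hx))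

/-- Complex powers of a Hermitian matrix, taken on the support; they extend `matRpow` to complex
exponents. -/
noncomputable def matCpow {A : Matrix n n ℂ} (hA : A.IsHermitian) (z : ℂ) : Matrix n n ℂ :=
  (hA.eigenvectorUnitary : Matrix n n ℂ) *
    diagonal (fun i => supportCpow (hA.eigenvalues i) z) *
    star (hA.eigenvectorUnitary : Matrix n n ℂ)

theorem matCpow_one {A : Matrix n n ℂ} (hA : A.IsHermitian) : matCpow hA 1 = A := by
  simp only [matCpow, supportCpow_one]
  conv_rhs => rw [hA.spectral_theorem, Unitary.conjStarAlgAut_apply]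
  rfl

theorem matCpow_add {A : Matrix n n ℂ} (hA : A.IsHermitian) (z w : ℂ) :
    matCpow hA (z + w) = matCpow hA z * matCpow hA w := by
  simp only [matCpow, supportCpow_add, ← diagonal_mul_diagonal, mul_assoc]
  rw [← mul_assoc (star _) (hA.eigenvectorUnitary : Matrix n n ℂ),
    Unitary.coe_star_mul_self, one_mul]

theorem matRpow_eq_matCpow {A : Matrix n n ℂ} (hA : A.PosSemidef) (t : ℝ) :
    matRpow A t = matCpow hA.1 t := by
  simp only [matRpow, dif_pos hA.1, matCpow, supportCpow_ofReal (hA.eigenvalues_nonneg _)]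

theorem norm_matCpow_le {A : Matrix n n ℂ} (hA : A.IsHermitian) {z : ℂ} {C : ℝ} (hC : 0 ≤ C)
    (h : ∀ i, ‖supportCpow (hA.eigenvalues i) z‖ ≤ C) : ‖matCpow hA z‖ ≤ C := by
  rw [matCpow, ← Unitary.coe_star, CStarRing.norm_mul_coe_unitary, CStarRing.norm_coe_unitary_mul,
    l2_opNorm_diagonal]
  exact (pi_norm_le_iff_of_nonneg hC).2 h

theorem norm_matCpow_le_one {A : Matrix n n ℂ} (hA : A.PosSemidef) {z : ℂ} (hz : z.re = 0) :
    ‖matCpow hA.1 z‖ ≤ 1 :=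
  norm_matCpow_le hA.1 zero_le_one fun i => norm_supportCpow_le_one (hA.eigenvalues_nonneg i) hz

theorem exists_norm_matCpow_le {A : Matrix n n ℂ} (hA : A.PosSemidef) :
    ∃ C : ℝ, ∀ z : ℂ, 0 ≤ z.re → z.re ≤ 1 → ‖matCpow hA.1 z‖ ≤ C := by
  refine ⟨∑ i, max (hA.1.eigenvalues i) 1, fun z hz0 hz1 => norm_matCpow_le hA.1 (by positivity)
    fun i => (norm_supportCpow_le_max (hA.eigenvalues_nonneg i) hz0 hz1).trans ?_⟩
  exact Finset.single_le_sum (f := fun i => max (hA.1.eigenvalues i) 1)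
    (fun i _ => by positivity) (Finset.mem_univ i)

theorem differentiable_matCpow_apply {A : Matrix n n ℂ} (hA : A.IsHermitian) (i j : n) :
    Differentiable ℂ fun z => matCpow hA z i j := by
  simp_rw [matCpow, mul_apply (M := _ * diagonal _), mul_diagonal]
  fun_prop

theorem matRpow_eq_cfc {A : Matrix n n ℂ} (hA : A.IsHermitian) (t : ℝ) :
    matRpow A t = cfc (fun x : ℝ => if x = 0 then 0 else x ^ t) A := by
  rw [hA.cfc_eq, IsHermitian.cfc, Unitary.conjStarAlgAut_apply, matRpow, dif_pos hA]
  rfl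

theorem isHermitian_matRpow (A : Matrix n n ℂ) (t : ℝ) : (matRpow A t).IsHermitian := by
  by_cases hA : A.IsHermitian
  · rw [matRpow_eq_cfc hA]
    exact cfc_predicate _ A
  · rw [matRpow, dif_neg hA]
    exact isHermitian_zero

theorem posSemidef_matRpow {A : Matrix n n ℂ} (hA : A.PosSemidef) (t : ℝ) :
    (matRpow A t).PosSemidef := by
  rw [matRpow_eq_cfc hA.1, ← nonneg_iff_posSemidef]
  refine cfc_nonneg fun x hx => ?_
  have := spectrum_nonneg_of_nonneg hA.nonneg hx
  positivity

theorem matRpow_one {A : Matrix n n ℂ} (hA : A.IsHermitian) : matRpow A 1 = A := by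
  rw [matRpow_eq_cfc hA]
  conv_rhs => rw [← cfc_id ℝ A]
  exact cfc_congr fun x _ => by simp +contextual [eq_comm]

theorem matRpow_add {A : Matrix n n ℂ} (hA : A.PosSemidef) (s t : ℝ) :
    matRpow A (s + t) = matRpow A s * matRpow A t := by
  simp only [matRpow_eq_matCpow hA, Complex.ofReal_add, matCpow_add]

theorem matRpow_matRpow {A : Matrix n n ℂ} (hA : A.PosSemidef) (s t : ℝ) :
    matRpow (matRpow A s) t = matRpow A (s * t) := by
  rw [matRpow_eq_cfc (isHermitian_matRpow A s), matRpow_eq_cfc hA.1, matRpow_eq_cfc hA.1,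
    ← cfc_comp' _ _ A ((A.finite_real_spectrum.image _).continuousOn _)
      (A.finite_real_spectrum.continuousOn _)]
  refine cfc_congr fun x hx => ?_
  have hx0 : 0 ≤ x := spectrum_nonneg_of_nonneg hA.nonneg hx
  by_cases h : x = 0
  · simp [h]
  · simp [h, Real.rpow_mul hx0, Real.rpow_eq_zero_iff_of_nonneg hx0]

theorem trace_matRpow {A : Matrix n n ℂ} (hA : A.IsHermitian) {t : ℝ} (ht : t ≠ 0) :
    (matRpow A t).trace = ((∑ i, hA.eigenvalues i ^ t : ℝ) : ℂ) := by
  rw [matRpow_eq_cfc hA, trace_cfc hA, Complex.ofReal_sum]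
  refine Finset.sum_congr rfl fun i _ => ?_
  split_ifs with h
  · simp [h, Real.zero_rpow ht]
  · rfl

theorem trace_matRpow_conjTranspose_mul_self (M : Matrix m n ℂ) {t : ℝ} (ht : t ≠ 0) :
    (matRpow (Mᴴ * M) t).trace = ((∑ i, sqSingVal M i ^ t : ℝ) : ℂ) :=
  trace_matRpow (isHermitian_conjTranspose_mul_self M) ht

theorem matRpow_half_mul_self {A : Matrix n n ℂ} (hA : A.PosSemidef) (t : ℝ) :
    matRpow A (t / 2) * matRpow A (t / 2) = matRpow A t := by
  rw [← matRpow_add hA, add_halves]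

theorem trace_matRpow_mul_matRpow {A B : Matrix n n ℂ} (hA : A.PosSemidef) (hB : B.PosSemidef)
    (s t : ℝ) : (matRpow A s * matRpow B t).trace =
      ((∑ i, sqSingVal (matRpow A (s / 2) * matRpow B (t / 2)) i : ℝ) : ℂ) := by
  rw [Complex.ofReal_sum]
  refine Eq.trans ?_ (trace_conjTranspose_mul_self_eq_sum_sqSingVal _)
  rw [conjTranspose_mul, (isHermitian_matRpow A _).eq, (isHermitian_matRpow B _).eq,
    ← matRpow_half_mul_self hA s, ← matRpow_half_mul_self hB t, ← mul_assoc, trace_mul_comm]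
  simp only [mul_assoc]

theorem matRpow_conj_eq_conjTranspose_mul_self {A B : Matrix n n ℂ} (hA : A.PosSemidef) (s : ℝ) :
    matRpow B s * A * matRpow B s =
      (matRpow A (1 / 2) * matRpow B s)ᴴ * (matRpow A (1 / 2) * matRpow B s) := by
  rw [conjTranspose_mul, (isHermitian_matRpow A _).eq, (isHermitian_matRpow B _).eq]
  nth_rw 1 [← matRpow_one hA.1, ← matRpow_half_mul_self hA]
  simp only [mul_assoc]

theorem matRpow_mul_matRpow_ne_zero {A B : Matrix n n ℂ} (hA : A.PosSemidef) (hB : B.PosSemidef)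
    (hAB : A * B ≠ 0) (s t : ℝ) : matRpow A s * matRpow B t ≠ 0 := by
  intro h
  have hA1 : A = matRpow A (1 - s) * matRpow A s := by
    rw [← matRpow_add hA, sub_add_cancel, matRpow_one hA.1]
  have hB1 : B = matRpow B t * matRpow B (1 - t) := by
    rw [← matRpow_add hB, add_sub_cancel, matRpow_one hB.1]
  refine hAB ?_
  rw [hA1, hB1, mul_assoc, ← mul_assoc (matRpow A s), h, zero_mul, mul_zero]

theorem weakLogMajorized_sqSingVal_matRpow_mul {A B : Matrix n n ℂ} (hA : A.PosSemidef)
    (hB : B.PosSemidef) {t : ℝ} (ht0 : 0 < t) (ht1 : t ≤ 1) :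
    WeakLogMajorized (sqSingVal (matRpow A t * matRpow B t))
      (fun i => sqSingVal (A * B) i ^ t) := by
  intro c hc
  have hc' : 0 < c ^ t⁻¹ := Real.rpow_pos_of_pos hc _
  rw [← Real.rpow_inv_rpow hc.le ht0.ne',
    prod_max_rpow_div_rpow_one (sqSingVal_nonneg _) hc'.le ht0.le,
    matRpow_eq_matCpow hA, matRpow_eq_matCpow hB]
  obtain ⟨C, hC⟩ := exists_norm_matCpow_le hA
  obtain ⟨D, hD⟩ := exists_norm_matCpow_le hB
  refine prod_max_sqSingVal_le_rpow (F := fun z => matCpow hA.1 z * matCpow hB.1 z) (C := C * D)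
    (fun i j => ?_) (fun z hz0 hz1 => ?_) (fun z hz => ?_) (fun z hz => ?_) ht0.le ht1 hc'
  · simp only [mul_apply]
    exact Differentiable.fun_sum fun k _ =>
      (differentiable_matCpow_apply hA.1 i k).mul (differentiable_matCpow_apply hB.1 k j)
  · exact norm_mul_le_of_le (hC z hz0 hz1) (hD z hz0 hz1)
  · exact (norm_mul_le _ _).trans
      (mul_le_one₀ (norm_matCpow_le_one hA hz) (norm_nonneg _) (norm_matCpow_le_one hB hz))
  · have hre : (z - 1).re = 0 := by rw [Complex.sub_re, hz, Complex.one_re, sub_self]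
    refine ⟨matCpow hA.1 (z - 1), matCpow hB.1 (z - 1), norm_matCpow_le_one hA hre,
      norm_matCpow_le_one hB hre, ?_⟩
    calc matCpow hA.1 z * matCpow hB.1 z
        = matCpow hA.1 (z - 1 + 1) * matCpow hB.1 (1 + (z - 1)) := by
          rw [sub_add_cancel, add_sub_cancel]
      _ = matCpow hA.1 (z - 1) * (A * B) * matCpow hB.1 (z - 1) := by
          simp only [matCpow_add, matCpow_one, mul_assoc]

end Powers

section RenyiDivergences

theorem mul_ne_zero_of_ker_le {𝕜 n : Type*} [RCLike 𝕜] [Fintype n] {A B : Matrix n n 𝕜}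
    (hA : A.IsHermitian) (hB : B.IsHermitian) (hA0 : A ≠ 0)
    (hker : LinearMap.ker B.mulVecLin ≤ LinearMap.ker A.mulVecLin) : A * B ≠ 0 := by
  classical
  intro h
  have hBA : B * A = 0 := by
    rw [← hB.eq, ← hA.eq, ← conjTranspose_mul, h, conjTranspose_zero]
  have hAA : A * A = 0 := by
    refine ext_of_mulVec_single fun i => ?_
    have hmem : A *ᵥ Pi.single i 1 ∈ LinearMap.ker B.mulVecLin := by
      rw [LinearMap.mem_ker, mulVecLin_apply, mulVec_mulVec, hBA, zero_mulVec]
    simpa only [LinearMap.mem_ker, mulVecLin_apply, mulVec_mulVec, zero_mulVec] using hker hmem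
  refine hA0 (conjTranspose_mul_self_eq_zero.1 ?_)
  rw [hA.eq, hAA]

variable {n : Type*} [Fintype n] [DecidableEq n]

theorem trace_matRpow_sandwiched {ρ : Matrix n n ℂ} (hρ : ρ.PosSemidef) (σ : Matrix n n ℂ)
    (s : ℝ) {α : ℝ} (hα : α ≠ 0) :
    (matRpow (matRpow σ s * ρ * matRpow σ s) α).trace.re =
      ∑ i, sqSingVal (matRpow ρ (1 / 2) * matRpow σ s) i ^ α := by
  rw [matRpow_conj_eq_conjTranspose_mul_self hρ, trace_matRpow_conjTranspose_mul_self _ hα,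
    Complex.ofReal_re]

theorem trace_le_trace_sandwiched {ρ σ : Matrix n n ℂ} (hρ : ρ.PosSemidef)
    (hσ : σ.PosSemidef) {α : ℝ} (hα0 : 0 < α) (hα1 : α ≤ 1) :
    (matRpow ρ α * matRpow σ (1 - α)).trace.re ≤
      (matRpow (matRpow σ ((1 - α) / (2 * α)) * ρ * matRpow σ ((1 - α) / (2 * α))) α).trace.re := by
  have h := weakLogMajorized_sqSingVal_matRpow_mul (posSemidef_matRpow hρ (1 / 2))
    (posSemidef_matRpow hσ ((1 - α) / (2 * α))) hα0 hα1
  rw [matRpow_matRpow hρ, matRpow_matRpow hσ, one_div_mul_eq_div,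
    show (1 - α) / (2 * α) * α = (1 - α) / 2 by field_simp] at h
  rw [trace_matRpow_mul_matRpow hρ hσ, Complex.ofReal_re, trace_matRpow_sandwiched hρ σ _ hα0.ne']
  exact h.sum_le_sum (sqSingVal_nonneg _) fun i => Real.rpow_nonneg (sqSingVal_nonneg _ i) α

theorem trace_sandwiched_le_trace {ρ σ : Matrix n n ℂ} (hρ : ρ.PosSemidef)
    (hσ : σ.PosSemidef) {α : ℝ} (hα : 1 ≤ α) :
    (matRpow (matRpow σ ((1 - α) / (2 * α)) * ρ * matRpow σ ((1 - α) / (2 * α))) α).trace.re ≤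
      (matRpow ρ α * matRpow σ (1 - α)).trace.re := by
  have hα0 : 0 < α := zero_lt_one.trans_le hα
  have h := weakLogMajorized_sqSingVal_matRpow_mul (posSemidef_matRpow hρ (α / 2))
    (posSemidef_matRpow hσ ((1 - α) / 2)) (inv_pos.2 hα0) (inv_le_one_of_one_le₀ hα)
  rw [matRpow_matRpow hρ, matRpow_matRpow hσ, show α / 2 * α⁻¹ = 1 / 2 by field_simp,
    show (1 - α) / 2 * α⁻¹ = (1 - α) / (2 * α) by field_simp] at h
  have hα' := h.rpow (sqSingVal_nonneg _)
    (fun i => Real.rpow_nonneg (sqSingVal_nonneg _ i) _) hα0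
  simp only [Real.rpow_inv_rpow (sqSingVal_nonneg _ _) hα0.ne'] at hα'
  rw [trace_matRpow_mul_matRpow hρ hσ, Complex.ofReal_re, trace_matRpow_sandwiched hρ σ _ hα0.ne']
  exact hα'.sum_le_sum (fun i => Real.rpow_nonneg (sqSingVal_nonneg _ i) α) (sqSingVal_nonneg _)

theorem trace_matRpow_mul_matRpow_pos {ρ σ : Matrix n n ℂ} (hρ : ρ.PosSemidef) (hσ : σ.PosSemidef)
    (hρσ : ρ * σ ≠ 0) (s t : ℝ) : 0 < (matRpow ρ s * matRpow σ t).trace.re := by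
  have h := sum_sqSingVal_rpow_pos (matRpow_mul_matRpow_ne_zero hρ hσ hρσ (s / 2) (t / 2)) 1
  rw [trace_matRpow_mul_matRpow hρ hσ, Complex.ofReal_re]
  simpa only [Real.rpow_one] using h

theorem trace_sandwiched_pos {ρ σ : Matrix n n ℂ} (hρ : ρ.PosSemidef) (hσ : σ.PosSemidef)
    (hρσ : ρ * σ ≠ 0) (s : ℝ) {α : ℝ} (hα : α ≠ 0) :
    0 < (matRpow (matRpow σ s * ρ * matRpow σ s) α).trace.re := by
  rw [trace_matRpow_sandwiched hρ σ _ hα]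
  exact sum_sqSingVal_rpow_pos (matRpow_mul_matRpow_ne_zero hρ hσ hρσ _ _) α

theorem renyiDiv_ge_sandwichedRenyiDiv_general {ρ σ : Matrix n n ℂ} (hρ : ρ.PosSemidef)
    (hσ : σ.PosSemidef) (hρσ : ρ * σ ≠ 0) {α : ℝ} (hα : 0 < α) (hα1 : α ≠ 1) :
    renyiDiv α ρ σ ≥ sandwichedRenyiDiv α ρ σ ∧
      (1 < α →
        (matRpow (matRpow σ ((1 - α) / (2 * α)) * ρ * matRpow σ ((1 - α) / (2 * α))) α).trace.re ≤
          (matRpow ρ α * matRpow σ (1 - α)).trace.re) ∧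
      (α < 1 →
        (matRpow (matRpow σ ((1 - α) / (2 * α)) * ρ * matRpow σ ((1 - α) / (2 * α))) α).trace.re ≥
          (matRpow ρ α * matRpow σ (1 - α)).trace.re) := by
  refine ⟨?_, fun h => trace_sandwiched_le_trace hρ hσ h.le,
    fun h => trace_le_trace_sandwiched hρ hσ hα h.le⟩
  have hpos := trace_matRpow_mul_matRpow_pos hρ hσ hρσ α (1 - α)
  have hpos' := trace_sandwiched_pos hρ hσ hρσ ((1 - α) / (2 * α)) hα.ne'
  rcases hα1.lt_or_gt with h | h
  · exact mul_le_mul_of_nonpos_left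
      (Real.log_le_log hpos (trace_le_trace_sandwiched hρ hσ hα h.le))
      (inv_nonpos.2 (sub_nonpos.2 h.le))
  · exact mul_le_mul_of_nonneg_left
      (Real.log_le_log hpos' (trace_sandwiched_le_trace hρ hσ h.le))
      (inv_nonneg.2 (sub_nonneg.2 h.le))

end RenyiDivergences

theorem renyiDiv_ge_sandwichedRenyiDiv {n : Type*} [Fintype n] [DecidableEq n]
    (ρ σ : Matrix n n ℂ) (hρ : ρ.PosSemidef) (hρ1 : ρ.trace = 1) (hσ : σ.PosSemidef)
    (hker : LinearMap.ker σ.mulVecLin ≤ LinearMap.ker ρ.mulVecLin)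
    (α : ℝ) (hα : 0 < α) (hα1 : α ≠ 1) :
    renyiDiv α ρ σ ≥ sandwichedRenyiDiv α ρ σ ∧
      (1 < α →
        (matRpow (matRpow σ ((1 - α) / (2 * α)) * ρ * matRpow σ ((1 - α) / (2 * α))) α).trace.re ≤
          (matRpow ρ α * matRpow σ (1 - α)).trace.re) ∧
      (α < 1 →
        (matRpow (matRpow σ ((1 - α) / (2 * α)) * ρ * matRpow σ ((1 - α) / (2 * α))) α).trace.re ≥
          (matRpow ρ α * matRpow σ (1 - α)).trace.re) := by
  have hρ0 : ρ ≠ 0 := by rintro rfl; simp at hρ1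
  exact renyiDiv_ge_sandwichedRenyiDiv_general hρ hσ (mul_ne_zero_of_ker_le hρ.1 hσ.1 hρ0 hker)
    hα hα1
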